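/- arXiv:math/0701139 — 3 statements merged into one kernel-verified Lean document; each statement's English description precedes it below -/
import Mathlib

section
/- Let F be a field and let E = F(α) be a field extension of degree d whose generator satisfies α^d = bα + c with b, c ∈ F (this includes the case b = 0, i.e. α^d = c). Let φ = N_{E/F} be the norm form of E/F. Then φ satisfies Scharlau's norm principle for every quadratic Galois field extension K/F: if a ∈ K^× is a similarity factor of the extended form N_{(K⊗_F E)/K}, then N_{K/F}(a) is a similarity factor of N_{E/F}. -/
/-!
A similarity factor `a` of a norm form is the norm of the image of `1`, and conversely
multiplication by an element of norm `a ≠ 0` is a similarity with factor `a`; so similarity factors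
are exactly nonzero norms. If `a = N_{(K⊗E)/K}(z)`, transitivity of the norm along the towers
`F ⊆ K → K ⊗ E` and `F ⊆ E → K ⊗ E` gives
`N_{K/F}(a) = N_{(K⊗E)/F}(z) = N_{E/F}(N_{(K⊗E)/E}(z))`, which is a norm from `E`.
-/

open TensorProduct

attribute [local instance] Algebra.TensorProduct.rightAlgebra in
/-- Both sides are the norm of `z` from `K ⊗[F] E` down to `F`. -/
lemma norm_norm_tensor_comm (F E K : Type*) [Field F] [Field E] [Field K]
    [Algebra F E] [Algebra F K] [FiniteDimensional F E] [FiniteDimensional F K]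
    (z : K ⊗[F] E) :
    Algebra.norm F (Algebra.norm K z) = Algebra.norm F (Algebra.norm E z) := by
  rw [Algebra.norm_norm, Algebra.norm_norm]

/-- **Scharlau's norm principle for the norm form of `E = F(α)` with `α^d = bα + c`, over
quadratic Galois extensions.**  If `a ∈ K^×` is a similarity factor of the extended norm
form `N_{(K⊗E)/K}` on `K ⊗[F] E`, then `N_{K/F}(a)` is a similarity factor of `N_{E/F}`. -/
theorem snp_quadratic_galois_of_trinomial_generator
    (F E K : Type*) [Field F] [Field E] [Field K]
    [Algebra F E] [Algebra F K] [FiniteDimensional F E] [FiniteDimensional F K]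
    (d : ℕ) (b c : F)
    (α : E) (hαgen : IntermediateField.adjoin F {α} = ⊤)
    (hαpow : α ^ d = algebraMap F E b * α + algebraMap F E c)
    (hEdeg : Module.finrank F E = d)
    [IsGalois F K] (hK2 : Module.finrank F K = 2) :
    ∀ a : K, a ≠ 0 →
      (∃ g : (K ⊗[F] E) ≃ₗ[K] (K ⊗[F] E),
        ∀ z : K ⊗[F] E, Algebra.norm K (g z) = a * Algebra.norm K z) →
      ∃ h : E ≃ₗ[F] E,
        ∀ x : E, Algebra.norm F (h x) = Algebra.norm F a * Algebra.norm F x := by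
  intro a ha ⟨g, hg⟩
  have h1 : Algebra.norm K (g 1) = a := by simpa using hg 1
  let _ : Algebra E (K ⊗[F] E) := Algebra.TensorProduct.rightAlgebra
  have h2 := norm_norm_tensor_comm F E K (g 1)
  rw [h1] at h2
  have hy : Algebra.norm E (g 1) ≠ 0 := by
    intro h
    rw [h, Algebra.norm_zero] at h2
    exact ha (Algebra.norm_eq_zero_iff.mp h2)
  refine ⟨LinearEquiv.ofBijective (LinearMap.mulLeft F (Algebra.norm E (g 1))) (mulLeft_bijective₀ _ hy), fun x => ?_⟩
  rw [h2, ← map_mul]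
  rfl
end

section
/- Let F be an infinite field, let φ_1 be a nonzero form of degree d_1 in n variables over F, let m ≥ 2 be an integer, and assume char F = 0 or char F > d_1·m. Suppose φ_1 satisfies Scharlau's norm principle for every finite field extension of F. Then the form φ = φ_1^m (of degree d_1·m) satisfies Scharlau's norm principle for every finite field extension K/F: if a ∈ G_K(φ) then N_{K/F}(a) ∈ G_F(φ). -/
/-!
Over the infinite field `K`, a similitude `g` of `φ₁ ^ m` with factor `a` gives a polynomial identity
`P ^ m = a φ₁ ^ m`, where `P = φ₁ ∘ g`. As `K[X₁, …, Xₙ]` is integrally closed, `φ₁ ∣ P`, and the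
quotient `q` satisfies `q ^ m = a`, so it is a constant `c`. Thus `g` is a similitude of `φ₁` with
factor `c`, and `a = c ^ m`. The norm principle for `φ₁` gives `N(c)` as a similarity factor of `φ₁`
over `F`, and its `m`-th power `N(c) ^ m = N(a)` is then a similarity factor of `φ₁ ^ m`.
-/

/-- `a` is a similarity factor of the form given by the homogeneous polynomial `φ`
in `n` variables over `K`: there is a `K`-linear bijection `g` of `K^n` with
`φ(g v) = a · φ(v)` for all `v`. -/
def IsSimilarityFactor {K : Type*} [Field K] {n : ℕ}
    (φ : MvPolynomial (Fin n) K) (a : K) : Prop :=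
  ∃ g : (Fin n → K) ≃ₗ[K] (Fin n → K),
    ∀ v : Fin n → K, MvPolynomial.eval (g v) φ = a * MvPolynomial.eval v φ

/-- Composing a polynomial map with a linear map is again given by a
polynomial. -/
lemma exists_eval_comp_linear {K : Type*} [Field K] {n : ℕ} (φ : MvPolynomial (Fin n) K)
    (g : (Fin n → K) →ₗ[K] (Fin n → K)) :
    ∃ P : MvPolynomial (Fin n) K, ∀ v, MvPolynomial.eval v P = MvPolynomial.eval (g v) φ := by
  refine ⟨MvPolynomial.bind₁ (fun i => ∑ j, MvPolynomial.X j *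
    MvPolynomial.C (g (fun k => if j = k then 1 else 0) i)) φ, fun v => ?_⟩
  rw [← MvPolynomial.coe_aeval_eq_eval, ← MvPolynomial.coe_aeval_eq_eval]
  simp only [RingHom.coe_coe, MvPolynomial.aeval_bind₁]
  congr 2
  ext i
  rw [LinearMap.pi_apply_eq_sum_univ g v]
  simp [Finset.sum_apply]

lemma IsSimilarityFactor.pow {K : Type*} [Field K] {n : ℕ} {φ : MvPolynomial (Fin n) K} {c : K}
    (h : IsSimilarityFactor φ c) (m : ℕ) : IsSimilarityFactor (φ ^ m) (c ^ m) := by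
  obtain ⟨g, hg⟩ := h
  exact ⟨g, fun v => by rw [map_pow, map_pow, hg, mul_pow]⟩

/-- Over an infinite field, every similarity factor of `φ ^ m` is the `m`-th power of one of `φ`. -/
lemma IsSimilarityFactor.exists_of_pow {K : Type*} [Field K] [Infinite K] {n m : ℕ} (hm : m ≠ 0)
    {φ : MvPolynomial (Fin n) K} (hφ : φ ≠ 0) {a : K} (ha : a ≠ 0)
    (h : IsSimilarityFactor (φ ^ m) a) : ∃ c, c ^ m = a ∧ IsSimilarityFactor φ c := by
  obtain ⟨g, hg⟩ := h
  obtain ⟨P, hP⟩ := exists_eval_comp_linear φ g.toLinearMap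
  have hPm : P ^ m = φ ^ m * MvPolynomial.C a := by
    refine MvPolynomial.funext fun v => ?_
    have := hg v
    simp only [map_pow, map_mul, MvPolynomial.eval_C, hP, LinearEquiv.coe_coe] at this ⊢
    rw [this, mul_comm]
  obtain ⟨q, rfl⟩ : φ ∣ P :=
    (IsIntegrallyClosed.pow_dvd_pow_iff hm).1 ⟨_, hPm⟩
  have hq : q ^ m = MvPolynomial.C a :=
    mul_left_cancel₀ (pow_ne_zero m hφ) (by rw [← mul_pow, hPm])
  have hu : IsUnit q :=
    (isUnit_pow_iff hm).1 (hq ▸ (IsUnit.mk0 a ha).map MvPolynomial.C)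
  obtain ⟨c, -, rfl⟩ := MvPolynomial.isUnit_iff_eq_C_of_isReduced.1 hu
  refine ⟨c, MvPolynomial.C_injective (Fin n) K (by rw [map_pow, hq]), g, fun v => ?_⟩
  have := hP v
  rw [map_mul, MvPolynomial.eval_C, LinearEquiv.coe_coe] at this
  rw [← this, mul_comm]


/-- **SNP for `m`-th powers of forms over infinite fields.**  Let `F` be an infinite field
and `φ₁ ≠ 0` a form of degree `d₁` in `n` variables over `F` (`char F = 0` or
`char F > d₁·m`, `m ≥ 2`) satisfying Scharlau's norm principle for every finite extension
of `F`.  Then `φ = φ₁^m` satisfies Scharlau's norm principle for every finite extension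
`K/F`. -/
theorem snp_pow_of_infinite
    {F : Type u} [Field F] [Infinite F] (n d₁ m : ℕ) (hm : 2 ≤ m)
    (hchar : ringChar F = 0 ∨ d₁ * m < ringChar F)
    (φ₁ : MvPolynomial (Fin n) F) (hφ₁ : φ₁ ≠ 0) (hhom : φ₁.IsHomogeneous d₁)
    (hSNP : ∀ (K : Type u) [Field K] [Algebra F K] [FiniteDimensional F K],
      ∀ a : K, a ≠ 0 → IsSimilarityFactor (φ₁.map (algebraMap F K)) a →
        IsSimilarityFactor φ₁ (Algebra.norm F a))
    (K : Type u) [Field K] [Algebra F K] [FiniteDimensional F K]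
    (a : K) (ha : a ≠ 0)
    (hG : IsSimilarityFactor ((φ₁ ^ m).map (algebraMap F K)) a) :
    IsSimilarityFactor (φ₁ ^ m) (Algebra.norm F a) := by
  have : Infinite K := Infinite.of_injective _ (algebraMap F K).injective
  rw [map_pow] at hG
  obtain ⟨c, rfl, hc⟩ := hG.exists_of_pow (by omega)
    ((map_ne_zero_iff _ (MvPolynomial.map_injective _ (algebraMap F K).injective)).2 hφ₁) ha
  rw [map_pow]
  exact (hSNP K c (ne_zero_pow (by omega) ha) hc).pow m
end

section
/- Let F'/F be a finite separable field extension and let φ_0 be a form of degree d in n variables over F'. Let φ be the transfer N_{F'/F}(φ_0), i.e. the form of degree d·[F':F] on (F')^n viewed as an F-vector space, given by φ(v) = N_{F'/F}(φ_0(v)). Suppose that for every finite field extension L'/F' the form (φ_0)_{L'} is round (every nonzero represented value is a similarity factor), and that φ_0 satisfies Scharlau's norm principle for every finite field extension of F'. Then for every finite field extension K/F that is linearly disjoint from F' over F (i.e. K' = K ⊗_F F' is a field), φ satisfies Scharlau's norm principle for K/F: if a ∈ K^× and there is a K-linear bijection g of (K')^n with N_{K'/K}((φ_0)_{K'}(g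 v)) = a·N_{K'/K}((φ_0)_{K'}(v)) for all v ∈ (K')^n, then there is an F-linear bijection h of (F')^n with N_{F'/F}(φ_0(h v)) = N_{K/F}(a)·N_{F'/F}(φ_0(v)) for all v ∈ (F')^n. -/
/-! If `φ₀` has a nonzero value `b = φ₀(w)` over `F'`, compare it with `c = φ₀(g w)` over `K'`:
the similitude `g` gives `N_{K'/K}(c / b) = a`. Roundness over `K'` puts `b` and `c`, hence `c / b`,
in the similarity group of `φ₀` over `K'`, so by the norm principle `N_{K'/F'}(c / b)` is a
similarity factor of `φ₀`. Its similitude, viewed as an `F`-linear map, multiplies the transfer by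
`N_{F'/F}(N_{K'/F'}(c / b)) = N_{K'/F}(c / b) = N_{K/F}(a)`. If `φ₀` vanishes identically on
`(F')^n`, the identity map works. -/

open TensorProduct

theorem IsSimilarityFactor.div {K : Type*} [Field K] {n : ℕ} {φ : MvPolynomial (Fin n) K}
    {b c : K} (hb0 : b ≠ 0) (hc : IsSimilarityFactor φ c) (hb : IsSimilarityFactor φ b) :
    IsSimilarityFactor φ (c / b) := by
  obtain ⟨gc, hgc⟩ := hc
  obtain ⟨gb, hgb⟩ := hb
  refine ⟨gb.symm.trans gc, fun v => ?_⟩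
  have h := hgb (gb.symm v)
  rw [LinearEquiv.apply_symm_apply] at h
  rw [LinearEquiv.trans_apply, hgc, h]
  field_simp

/-- **SNP for transfers of round forms.**  Let `F'/F` be finite separable and `φ₀` a form
of degree `d` in `n` variables over `F'` which is round over every finite extension of `F'`
and satisfies Scharlau's norm principle for every finite extension of `F'`.  Let `K/F` be a
finite extension linearly disjoint from `F'` over `F`, with compositum `K' = K ⊗_F F'`
(realized as a field `K'` such that the product map `K ⊗[F] F' → K'` is bijective).  If
`a ∈ K^×` is a similarity factor of the extended transferred form
`v ↦ N_{K'/K}((φ₀)_{K'}(v))` on `(K')^n` (as a `K`-space), then `N_{K/F}(a)` is a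
similarity factor of the transfer `φ = N_{F'/F}(φ₀)` on `(F')^n` (as an `F`-space). -/
theorem snp_transfer_of_round
    {F F' : Type u} [Field F] [Field F'] [Algebra F F']
    [FiniteDimensional F F'] [Algebra.IsSeparable F F']
    (n d : ℕ) (φ₀ : MvPolynomial (Fin n) F') (hhom : φ₀.IsHomogeneous d)
    (hround : ∀ (L' : Type u) [Field L'] [Algebra F' L'] [FiniteDimensional F' L'],
      ∀ e : L', e ≠ 0 →
        (∃ v : Fin n → L', MvPolynomial.eval v (φ₀.map (algebraMap F' L')) = e) →
        IsSimilarityFactor (φ₀.map (algebraMap F' L')) e)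
    (hSNP : ∀ (L' : Type u) [Field L'] [Algebra F' L'] [FiniteDimensional F' L'],
      ∀ e : L', e ≠ 0 → IsSimilarityFactor (φ₀.map (algebraMap F' L')) e →
        IsSimilarityFactor φ₀ (Algebra.norm F' e))
    (K K' : Type u) [Field K] [Algebra F K] [FiniteDimensional F K]
    [Field K'] [Algebra K K'] [Algebra F' K'] [Algebra F K']
    [IsScalarTower F K K'] [IsScalarTower F F' K'] [FiniteDimensional K K']
    (hcomp : Function.Bijective
      (Algebra.TensorProduct.productMap
        (IsScalarTower.toAlgHom F K K') (IsScalarTower.toAlgHom F F' K')))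
    (a : K) (ha : a ≠ 0)
    (hg : ∃ g : (Fin n → K') ≃ₗ[K] (Fin n → K'),
      ∀ v : Fin n → K',
        Algebra.norm K (MvPolynomial.eval (g v) (φ₀.map (algebraMap F' K'))) =
          a * Algebra.norm K (MvPolynomial.eval v (φ₀.map (algebraMap F' K')))) :
    ∃ h : (Fin n → F') ≃ₗ[F] (Fin n → F'),
      ∀ v : Fin n → F',
        Algebra.norm F (MvPolynomial.eval (h v) φ₀) =
          Algebra.norm F a * Algebra.norm F (MvPolynomial.eval v φ₀) := by
  by_cases hzero : ∀ v : Fin n → F', MvPolynomial.eval v φ₀ = 0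
  · exact ⟨LinearEquiv.refl F _, fun v => by simp [hzero]⟩
  push Not at hzero
  obtain ⟨w, hw⟩ := hzero
  obtain ⟨g, hg⟩ := hg
  have : FiniteDimensional F K' := FiniteDimensional.trans F K K'
  have : FiniteDimensional F' K' := FiniteDimensional.right F F' K'
  set ψ := φ₀.map (algebraMap F' K') with hψ
  set w' : Fin n → K' := algebraMap F' K' ∘ w with hw'
  have hb : MvPolynomial.eval w' ψ ≠ 0 := by
    rw [hψ, hw', ← MvPolynomial.map_eval]
    simpa using hw
  have hNb : Algebra.norm K (MvPolynomial.eval w' ψ) ≠ 0 := Algebra.norm_ne_zero_iff.mpr hb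
  have hc : MvPolynomial.eval (g w') ψ ≠ 0 := by
    rw [← Algebra.norm_ne_zero_iff (R := K), hg]
    exact mul_ne_zero ha hNb
  have hN : Algebra.norm K (MvPolynomial.eval (g w') ψ / MvPolynomial.eval w' ψ) = a := by
    rw [← mul_left_inj' hNb, ← map_mul, div_mul_cancel₀ _ hb, hg]
  obtain ⟨h, hh⟩ := hSNP K' _ (div_ne_zero hc hb)
    ((hround K' _ hc ⟨_, rfl⟩).div hb (hround K' _ hb ⟨_, rfl⟩))
  refine ⟨h.restrictScalars F, fun v => ?_⟩
  rw [LinearEquiv.restrictScalars_apply, hh, map_mul, Algebra.norm_norm,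
    ← Algebra.norm_norm (S := K), hN]
end
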